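/- arXiv:2605.26846 — 2 statements merged into one kernel-verified Lean document; each statement's English description precedes it below -/
import Mathlib

section
/- For every real x, the sequence M ↦ (∑_{k=0}^{M} (−1)^{M−k} P_{2k}(2M, M+1/2) x^{2M−2k}) / P_{2M}(2M, M+1/2) converges to cosh(πx) as M → ∞. -/
/-!
The arguments `i - (M + 1/2)`, `1 ≤ i ≤ 2M`, of the elementary symmetric polynomials are the
half-integers `±(j + 1/2)`, `0 ≤ j < M`, so that
`∑ₖ eₖ y ^ (2M - k) = ∏_{j < M} (y² - (j + 1/2)²)`.
Taking real parts at `y = i x` keeps exactly the even-indexed terms and identifies the numerator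
with `∏_{j < M} (-(x² + (j + 1/2)²))` (`numerator_eq_prod`). The denominator is the numerator at
`x = 0`, so the quotient is `∏_{j < M} (1 + x² / (j + 1/2)²)`.

The convergence of this product to `cosh (π x)` (`tendsto_cosh_prod`) follows from Euler's product
for the sine and the duplication formula `sin 2w = 2 sin w cos w`: separating odd and even factors
in the partial product of length `2n` at `2z` leaves the partial sine product at `z` times the
partial cosine product at `z`.
-/

/-- Signed generalized Stirling polynomial `P_k(m,x) = (-1)^k e_k(1-x, 2-x, …, m-x)`,
with `P_k(m,x) = 0` for `k < 0` or `k > m`. -/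
noncomputable def P (m : ℕ) (k : ℤ) (x : ℝ) : ℝ :=
  if 0 ≤ k then
    (-1 : ℝ) ^ k.toNat *
      ∑ S ∈ (Finset.range m).powersetCard k.toNat, ∏ i ∈ S, ((i : ℝ) + 1 - x)
  else 0
open Filter

/-- The generating function of the elementary symmetric polynomials, in powers of `y`. -/
lemma prod_add_eq_sum_esymm (m : ℕ) (a : ℕ → ℝ) (y : ℂ) :
    ∏ i ∈ Finset.range m, ((a i : ℂ) + y) =
      ∑ k ∈ Finset.range (m + 1),
        ((∑ S ∈ (Finset.range m).powersetCard k, ∏ i ∈ S, a i : ℝ) : ℂ) * y ^ (m - k) := by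
  rw [Finset.prod_add, Finset.sum_powerset, Finset.card_range]
  refine Finset.sum_congr rfl fun k _ => ?_
  push_cast
  rw [Finset.sum_mul]
  refine Finset.sum_congr rfl fun S hS => ?_
  rw [Finset.mem_powersetCard] at hS
  rw [Finset.prod_const, Finset.card_sdiff_of_subset hS.1, hS.2, Finset.card_range]

lemma prod_half_integers (M : ℕ) (y : ℂ) :
    ∏ i ∈ Finset.range (2 * M), ((((i : ℝ) + 1 - ((M : ℝ) + 1 / 2) : ℝ) : ℂ) + y) =
      ∏ j ∈ Finset.range M, (y ^ 2 - ((j : ℂ) + 1 / 2) ^ 2) := by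
  rw [two_mul, Finset.prod_range_add, ← Finset.prod_range_reflect, ← Finset.prod_mul_distrib]
  refine Finset.prod_congr rfl fun j hj => ?_
  have hj' := Finset.mem_range.mp hj
  have h : ((M - 1 - j : ℕ) : ℂ) = (M : ℂ) - 1 - j := by
    rw [Nat.cast_sub (by omega), Nat.cast_sub (by omega)]
    simp
  push_cast
  rw [h]
  ring

lemma sum_range_even_odd (f : ℕ → ℝ) (M : ℕ) :
    ∑ k ∈ Finset.range (2 * M + 1), f k =
      ∑ k ∈ Finset.range (M + 1), f (2 * k) + ∑ k ∈ Finset.range M, f (2 * k + 1) := by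
  induction M with
  | zero => simp
  | succ n ih =>
    rw [show 2 * (n + 1) + 1 = 2 * n + 1 + 1 + 1 by ring, Finset.sum_range_succ,
      Finset.sum_range_succ, ih, Finset.sum_range_succ _ (n + 1), Finset.sum_range_succ (fun k => f (2 * k + 1)) n,
      show 2 * (n + 1) = 2 * n + 1 + 1 by ring]
    ring

lemma I_mul_pow_even (x : ℝ) (n : ℕ) :
    (Complex.I * x) ^ (2 * n) = (((-1) ^ n * x ^ (2 * n) : ℝ) : ℂ) := by
  rw [mul_pow, pow_mul, Complex.I_sq]
  push_cast
  rfl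

/-- The numerator is the real part of `∏ᵢ (aᵢ + i x)` with `aᵢ` running over the half-integers;
the odd-indexed terms of the expansion are purely imaginary. -/
lemma numerator_eq_prod (M : ℕ) (x : ℝ) :
    ∑ k ∈ Finset.range (M + 1),
        (-1 : ℝ) ^ (M - k) * P (2 * M) ((2 * k : ℕ) : ℤ) ((M : ℝ) + 1 / 2) * x ^ (2 * M - 2 * k) =
      ∏ j ∈ Finset.range M, (-(x ^ 2 + ((j : ℝ) + 1 / 2) ^ 2)) := by
  have h := (prod_add_eq_sum_esymm (2 * M) (fun i => (i : ℝ) + 1 - ((M : ℝ) + 1 / 2))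
    (Complex.I * x)).symm.trans (prod_half_integers M (Complex.I * x))
  have hr : ∏ j ∈ Finset.range M, ((Complex.I * x) ^ 2 - ((j : ℂ) + 1 / 2) ^ 2) =
      ((∏ j ∈ Finset.range M, (-(x ^ 2 + ((j : ℝ) + 1 / 2) ^ 2)) : ℝ) : ℂ) := by
    push_cast
    refine Finset.prod_congr rfl fun j _ => ?_
    rw [mul_pow, Complex.I_sq]
    ring
  rw [hr] at h
  have h2 := congrArg Complex.re h
  rw [Complex.ofReal_re, Complex.re_sum, sum_range_even_odd] at h2
  rw [← h2]
  have hodd : ∀ k ∈ Finset.range M, (((∑ S ∈ (Finset.range (2 * M)).powersetCard (2 * k + 1),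
      ∏ i ∈ S, ((i : ℝ) + 1 - ((M : ℝ) + 1 / 2)) : ℝ) : ℂ) *
        (Complex.I * x) ^ (2 * M - (2 * k + 1))).re = 0 := by
    intro k hk
    have hk' := Finset.mem_range.mp hk
    rw [show 2 * M - (2 * k + 1) = 2 * (M - k - 1) + 1 by omega, pow_succ, I_mul_pow_even,
      Complex.re_ofReal_mul, Complex.re_ofReal_mul]
    simp
  rw [Finset.sum_eq_zero hodd, add_zero]
  refine Finset.sum_congr rfl fun k _ => ?_
  rw [← Nat.mul_sub, I_mul_pow_even, ← Complex.ofReal_mul, Complex.ofReal_re, P,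
    if_pos (Int.natCast_nonneg _), Int.toNat_natCast, pow_mul (-1 : ℝ) 2 k]
  norm_num
  ring

lemma denominator_eq_prod (M : ℕ) :
    P (2 * M) ((2 * M : ℕ) : ℤ) ((M : ℝ) + 1 / 2) =
      ∏ j ∈ Finset.range M, (-(((j : ℝ) + 1 / 2) ^ 2)) := by
  have h := numerator_eq_prod M 0
  rw [Finset.sum_range_succ, Finset.sum_eq_zero] at h
  · simpa using h
  · intro k hk
    have hk' := Finset.mem_range.mp hk
    rw [zero_pow (by omega), mul_zero]

/-- Separating odd and even indices in the partial sine product of length `2n` at `2z`. -/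
lemma sin_prod_duplication (z : ℂ) (n : ℕ) :
    ∏ j ∈ Finset.range (2 * n), ((1 : ℂ) - (2 * z) ^ 2 / ((j : ℂ) + 1) ^ 2) =
      (∏ j ∈ Finset.range n, ((1 : ℂ) - z ^ 2 / ((j : ℂ) + 1 / 2) ^ 2)) *
        ∏ j ∈ Finset.range n, ((1 : ℂ) - z ^ 2 / ((j : ℂ) + 1) ^ 2) := by
  induction n with
  | zero => simp
  | succ n ih =>
    rw [show 2 * (n + 1) = 2 * n + 1 + 1 by ring, Finset.prod_range_succ, Finset.prod_range_succ,
      ih, Finset.prod_range_succ _ n, Finset.prod_range_succ _ n]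
    have e1 : (2 * z) ^ 2 / (((2 * n : ℕ) : ℂ) + 1) ^ 2 = z ^ 2 / ((n : ℂ) + 1 / 2) ^ 2 := by
      rw [show ((2 * n : ℕ) : ℂ) + 1 = 2 * ((n : ℂ) + 1 / 2) by push_cast; ring, mul_pow, mul_pow,
        mul_div_mul_left _ _ (by norm_num)]
    have e2 : (2 * z) ^ 2 / (((2 * n + 1 : ℕ) : ℂ) + 1) ^ 2 = z ^ 2 / ((n : ℂ) + 1) ^ 2 := by
      rw [show ((2 * n + 1 : ℕ) : ℂ) + 1 = 2 * ((n : ℂ) + 1) by push_cast; ring, mul_pow, mul_pow,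
        mul_div_mul_left _ _ (by norm_num)]
    rw [e1, e2]
    ring

/-- Euler's product for the cosine, away from the zeros of `sin (π z)`. -/
lemma tendsto_cos_prod (z : ℂ) (hz : Complex.sin (Real.pi * z) ≠ 0) :
    Tendsto (fun n : ℕ => ∏ j ∈ Finset.range n, ((1 : ℂ) - z ^ 2 / ((j : ℂ) + 1 / 2) ^ 2))
      atTop (nhds (Complex.cos (Real.pi * z))) := by
  have h1 := Complex.tendsto_euler_sin_prod z
  have h2 := (Complex.tendsto_euler_sin_prod (2 * z)).comp
    (tendsto_id.const_mul_atTop' (zero_lt_two' ℕ))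
  have h3 := (h2.div h1 hz).div_const 2
  have hlim : Complex.sin (Real.pi * (2 * z)) / Complex.sin (Real.pi * z) / 2 =
      Complex.cos (Real.pi * z) := by
    rw [show (Real.pi : ℂ) * (2 * z) = 2 * (Real.pi * z) by ring, Complex.sin_two_mul]
    field_simp
  rw [hlim] at h3
  refine h3.congr' ?_
  -- The partial sine products at `z` are eventually nonzero because their limit is.
  filter_upwards [h1.eventually_ne hz] with n hn
  simp only [Pi.div_apply, Function.comp_apply, id_eq]
  rw [sin_prod_duplication, div_div, div_eq_iff (mul_ne_zero hn two_ne_zero)]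
  ring

lemma tendsto_cosh_prod (x : ℝ) :
    Tendsto (fun n : ℕ => ∏ j ∈ Finset.range n, (1 + x ^ 2 / ((j : ℝ) + 1 / 2) ^ 2))
      atTop (nhds (Real.cosh (Real.pi * x))) := by
  rcases eq_or_ne x 0 with rfl | hx
  · simp
  have e : (Real.pi : ℂ) * (x * Complex.I) = ((Real.pi * x : ℝ) : ℂ) * Complex.I := by
    push_cast
    ring
  have hz : Complex.sin (Real.pi * (x * Complex.I)) ≠ 0 := by
    rw [e, Complex.sin_mul_I, ← Complex.ofReal_sinh]
    refine mul_ne_zero ?_ Complex.I_ne_zero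
    rw [Complex.ofReal_ne_zero, Ne, Real.sinh_eq_zero]
    exact mul_ne_zero Real.pi_ne_zero hx
  have h := (Complex.continuous_re.tendsto _).comp (tendsto_cos_prod _ hz)
  rw [e, Complex.cos_mul_I, ← Complex.ofReal_cosh, Complex.ofReal_re] at h
  refine h.congr fun n => ?_
  rw [Function.comp_apply, ← Complex.ofReal_re (∏ j ∈ Finset.range n, _)]
  congr 1
  push_cast
  refine Finset.prod_congr rfl fun j _ => ?_
  rw [mul_pow, Complex.I_sq]
  ring

/-- The normalized polynomial sums converge to `cosh (π x)`. -/
theorem cosh_polynomial_limit (x : ℝ) :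
    Tendsto (fun M : ℕ =>
        (∑ k ∈ Finset.range (M + 1),
            (-1 : ℝ) ^ (M - k) * P (2 * M) ((2 * k : ℕ) : ℤ) ((M : ℝ) + 1 / 2)
              * x ^ (2 * M - 2 * k))
          / P (2 * M) ((2 * M : ℕ) : ℤ) ((M : ℝ) + 1 / 2))
      atTop (nhds (Real.cosh (Real.pi * x))) := by
  refine (tendsto_cosh_prod x).congr fun M => ?_
  rw [numerator_eq_prod, denominator_eq_prod, ← Finset.prod_div_distrib]
  refine Finset.prod_congr rfl fun j _ => ?_
  have hj : ((j : ℝ) + 1 / 2) ^ 2 ≠ 0 := by positivity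
  rw [neg_div_neg_eq, add_div, div_self hj, add_comm]
end

section
/- (i) The function x ↦ (sech x − sech x/(2 − sech x)²)/x² is Lebesgue integrable on (0,∞); (ii) the series ∑_{j=1}^{∞} (j/2^{j+1})·χ_j converges and equals ∫_{(0,∞)} (sech x − sech x/(2 − sech x)²)/x² dx; and (iii) the normalized partial sums (1/catalan(N)) · ∑_{j=1}^{N} (j/N)·C(2N−j−1, N−1)·χ_j converge, as N → ∞, to the same integral, where C(·,·) denotes the binomial coefficient and catalan(N) is the N-th Catalan number. -/
/-!
Since `∑ j s^j / 2^(j+1) = s / (2 - s)²` for `|s| < 2`, and the weights `j / 2^(j+1)` have total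
mass `1`, the integrand of the limit is `∑ j / 2^(j+1) * (s - s^j) / x²` with `s = sech x`.
Bernoulli's inequality gives `0 ≤ s - s^j ≤ j s (1 - s)`, while `s (1 - s) / x² ≤ exp (-x)`
(`sech_mul_one_sub_le`, from `cosh x ≤ exp (x²/2)` and `cosh x ≥ exp x / 2`).  So the `j`-th
integrand is dominated by `j exp (-x)`, which allows exchanging sum and integral and yields
`|χ_j| ≤ j` for `j ≥ 1`.

For the Catalan-normalized sums, write `N = M + 1` and `j = i + 1`.  The weight factors as
`j * catalanRatio M * ballotRatio M i`, where `catalanRatio M = (M + 2) / (2 (2 M + 1)) → 1/4` and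
`ballotRatio M i = C(2M - i, M) / C(2M, M)` is a product of `i` factors `(M - k) / (2M - k)`, each at
most `1/2` and tending to `1/2`.  Hence the weights tend to `j / 2^(j+1)` and are at most
`j / 2^(j-1)`; dominated convergence for series (Tannery) finishes the proof.
-/

open MeasureTheory

/-- Hyperbolic secant. -/
noncomputable def sech (x : ℝ) : ℝ := 1 / Real.cosh x

/-- The integral sequence `χ_n = ∫_0^∞ (sech x - sech^n x)/x² dx`. -/
noncomputable def chi (n : ℕ) : ℝ :=
  ∫ x in Set.Ioi (0 : ℝ), (sech x - (sech x) ^ n) / x ^ 2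
open Filter

/-! ### Bounds on the integrands -/

lemma sech_pos (x : ℝ) : 0 < sech x := by
  unfold sech; positivity

lemma sech_le_one (x : ℝ) : sech x ≤ 1 := by
  unfold sech
  rw [div_le_one (Real.cosh_pos x)]
  exact Real.one_le_cosh x

lemma measurable_sech : Measurable sech := by
  unfold sech
  exact measurable_const.div Real.measurable_cosh

lemma one_sub_sech_le (x : ℝ) : 1 - sech x ≤ x ^ 2 / 2 := by
  have h1 : Real.exp (-(x ^ 2 / 2)) ≤ sech x := by
    unfold sech
    rw [Real.exp_neg, ← one_div]
    exact one_div_le_one_div_of_le (Real.cosh_pos x) (Real.cosh_le_exp_half_sq x)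
  have h2 := Real.add_one_le_exp (-(x ^ 2 / 2))
  linarith

lemma sech_le_two_mul_exp (x : ℝ) : sech x ≤ 2 * Real.exp (-x) := by
  unfold sech
  rw [div_le_iff₀ (Real.cosh_pos x), Real.cosh_eq]
  have h : Real.exp (-x) * Real.exp x = 1 := by rw [← Real.exp_add]; simp
  nlinarith [sq_nonneg (Real.exp (-x))]

/-- The integrable majorant from which all the dominations are derived. -/
lemma sech_mul_one_sub_le (x : ℝ) (hx : 0 < x) :
    sech x * (1 - sech x) / x ^ 2 ≤ Real.exp (-x) := by
  rw [div_le_iff₀ (by positivity)]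
  have h := mul_le_mul (sech_le_two_mul_exp x) (one_sub_sech_le x)
    (by linarith [sech_le_one x]) (by positivity)
  linarith

lemma norm_integrand_le (j : ℕ) (hj : 1 ≤ j) (x : ℝ) (hx : 0 < x) :
    ‖(sech x - sech x ^ j) / x ^ 2‖ ≤ j * Real.exp (-x) := by
  obtain ⟨i, rfl⟩ : ∃ i, j = i + 1 := ⟨j - 1, by omega⟩
  have hs := sech_pos x
  have hs1 := sech_le_one x
  have hb := one_add_mul_le_pow (a := sech x - 1) (by linarith) i
  rw [show 1 + (sech x - 1) = sech x by ring] at hb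
  have hp : sech x ^ i ≤ 1 := pow_le_one₀ hs.le hs1
  have hle : sech x - sech x ^ (i + 1) ≤ (i + 1) * (sech x * (1 - sech x)) := by
    rw [pow_succ]
    nlinarith [mul_nonneg hs.le (sub_nonneg.2 hs1)]
  have h0 : 0 ≤ sech x - sech x ^ (i + 1) := by
    rw [pow_succ]; nlinarith
  rw [Real.norm_of_nonneg (by positivity)]
  calc _ ≤ (i + 1) * (sech x * (1 - sech x)) / x ^ 2 := by gcongr
    _ = (i + 1) * (sech x * (1 - sech x) / x ^ 2) := by ring
    _ ≤ (i + 1) * Real.exp (-x) := by gcongr; exact sech_mul_one_sub_le x hx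
    _ = _ := by push_cast; ring

lemma norm_chi_le (j : ℕ) (hj : 1 ≤ j) : ‖chi j‖ ≤ j := by
  unfold chi
  refine (norm_integral_le_of_norm_le
    ((integrableOn_exp_neg_Ioi 0).const_mul (j : ℝ)) ?_).trans ?_
  · filter_upwards [ae_restrict_mem measurableSet_Ioi] with x hx
    exact norm_integrand_le j hj x hx
  · rw [integral_const_mul, integral_exp_neg_Ioi_zero, mul_one]

lemma integrableOn_limit : IntegrableOn (fun x : ℝ =>
    (sech x - sech x / (2 - sech x) ^ 2) / x ^ 2) (Set.Ioi 0) := by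
  refine Integrable.mono' ((integrableOn_exp_neg_Ioi 0).const_mul 3) ?_ ?_
  · have := measurable_sech
    exact Measurable.aestronglyMeasurable (by fun_prop)
  · filter_upwards [ae_restrict_mem measurableSet_Ioi] with x hx
    have hx : 0 < x := hx
    have hs := sech_pos x
    have hs1 := sech_le_one x
    have h2 : (1 : ℝ) ≤ (2 - sech x) ^ 2 := by nlinarith
    have heq : sech x - sech x / (2 - sech x) ^ 2
        = sech x * (1 - sech x) * (3 - sech x) / (2 - sech x) ^ 2 := by
      have : 2 - sech x ≠ 0 := by linarith
      field_simp
      ring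
    have hnn : 0 ≤ sech x * (1 - sech x) := mul_nonneg hs.le (by linarith)
    have h3 : sech x * (1 - sech x) * (3 - sech x) / (2 - sech x) ^ 2
        ≤ 3 * (sech x * (1 - sech x)) := by
      rw [div_le_iff₀ (by linarith)]
      nlinarith [mul_nonneg hnn hs.le, mul_nonneg hnn (sub_nonneg.2 h2)]
    have h4 : 0 ≤ sech x * (1 - sech x) * (3 - sech x) / (2 - sech x) ^ 2 :=
      div_nonneg (mul_nonneg hnn (by linarith)) (by linarith)
    rw [heq, Real.norm_of_nonneg (div_nonneg h4 (by positivity))]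
    calc _ ≤ 3 * (sech x * (1 - sech x)) / x ^ 2 := by gcongr
      _ = 3 * (sech x * (1 - sech x) / x ^ 2) := by ring
      _ ≤ _ := by gcongr; exact sech_mul_one_sub_le x hx

/-! ### Exchange of sum and integral -/

lemma hasSum_weights (s : ℝ) (h0 : 0 < s) (h1 : s ≤ 1) :
    HasSum (fun j : ℕ => (j : ℝ) / 2 ^ (j + 1) * (s - s ^ j)) (s - s / (2 - s) ^ 2) := by
  have hA := (hasSum_coe_mul_geometric_of_norm_lt_one (r := (1 / 2 : ℝ))
    (by norm_num)).mul_left (s / 2)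
  have hB := (hasSum_coe_mul_geometric_of_norm_lt_one (r := s / 2)
    (by rw [Real.norm_of_nonneg (by positivity)]; linarith)).mul_left (1 / 2)
  have hne : 2 - s ≠ 0 := by linarith
  have hval : s / 2 * (1 / 2 / (1 - 1 / 2) ^ 2) - 1 / 2 * (s / 2 / (1 - s / 2) ^ 2)
      = s - s / (2 - s) ^ 2 := by
    rw [show 1 - s / 2 = (2 - s) / 2 by ring]
    field_simp
    ring
  rw [← hval]
  refine (congrArg (fun f => HasSum f _) (funext fun j => ?_)).mp (hA.sub hB)
  rw [div_pow, div_pow, pow_succ, one_pow]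
  field_simp

lemma summable_sq_mul_half_pow : Summable (fun j : ℕ => (j : ℝ) ^ 2 * (1 / 2) ^ j) :=
  summable_pow_mul_geometric_of_norm_lt_one 2 (by norm_num)

lemma hasSum_chi : HasSum (fun j : ℕ => (j : ℝ) / 2 ^ (j + 1) * chi j)
    (∫ x in Set.Ioi (0 : ℝ), (sech x - sech x / (2 - sech x) ^ 2) / x ^ 2) := by
  have hm := measurable_sech
  have key := hasSum_integral_of_dominated_convergence
    (μ := volume.restrict (Set.Ioi (0 : ℝ)))
    (F := fun (j : ℕ) x => (j : ℝ) / 2 ^ (j + 1) * ((sech x - sech x ^ j) / x ^ 2))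
    (f := fun x => (sech x - sech x / (2 - sech x) ^ 2) / x ^ 2)
    (fun j x => ((j : ℝ) ^ 2 * (1 / 2) ^ j) * Real.exp (-x))
    (fun j => Measurable.aestronglyMeasurable (by fun_prop))
    ?_ ?_ ?_ ?_
  · simp only [integral_const_mul] at key
    exact key
  · intro j
    filter_upwards [ae_restrict_mem measurableSet_Ioi] with x hx
    rcases Nat.eq_zero_or_pos j with rfl | hj
    · simp
    · rw [norm_mul, Real.norm_of_nonneg (by positivity : (0 : ℝ) ≤ j / 2 ^ (j + 1))]
      calc _ ≤ (j : ℝ) / 2 ^ (j + 1) * (j * Real.exp (-x)) := by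
            gcongr; exact norm_integrand_le j hj x hx
        _ ≤ (j : ℝ) / 2 ^ j * (j * Real.exp (-x)) := by gcongr <;> simp
        _ = _ := by rw [div_pow]; ring
  · exact Eventually.of_forall fun x => summable_sq_mul_half_pow.mul_right _
  · simp only [tsum_mul_right]
    exact (integrableOn_exp_neg_Ioi 0).const_mul _
  · refine Eventually.of_forall fun x => ?_
    have h := (hasSum_weights (sech x) (sech_pos x) (sech_le_one x)).div_const (x ^ 2)
    simpa only [mul_div_assoc] using h

/-! ### Asymptotics of the Catalan-triangle weights -/

/-- `C(2M - i, M) / C(2M, M)`, the `i`-dependence of the Catalan-triangle weights. -/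
noncomputable def ballotRatio (M i : ℕ) : ℝ := ((2 * M - i).choose M : ℝ) / M.centralBinom

/-- `C(2M, M) / ((M + 1) catalan (M + 1))`, i.e. the ratio of the `M`-th and `(M+1)`-st Catalan
numbers. -/
noncomputable def catalanRatio (M : ℕ) : ℝ :=
  (M.centralBinom : ℝ) / ((M + 1) * catalan (M + 1))

lemma catalanRatio_eq (M : ℕ) : catalanRatio M = (M + 2) / (2 * (2 * M + 1)) := by
  have h1 := succ_mul_catalan_eq_centralBinom (M + 1)
  have h2 := Nat.succ_mul_centralBinom_succ M
  rw [← h1] at h2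
  have h3 : ((M : ℝ) + 1) * ((M + 2) * catalan (M + 1)) = 2 * (2 * M + 1) * M.centralBinom := by
    have : (((M + 1) * ((M + 1 + 1) * catalan (M + 1)) : ℕ) : ℝ)
        = ((2 * (2 * M + 1) * M.centralBinom : ℕ) : ℝ) := by rw [h2]
    push_cast at this
    linarith
  have hpos : 0 < (M.centralBinom : ℝ) := by exact_mod_cast M.centralBinom_pos
  have hc : (catalan (M + 1) : ℝ) ≠ 0 := by
    intro h
    rw [h] at h3
    have : 0 < 2 * (2 * (M : ℝ) + 1) * M.centralBinom := by positivity
    linarith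
  unfold catalanRatio
  rw [div_eq_div_iff (by positivity) (by positivity)]
  linarith

lemma catalanRatio_nonneg (M : ℕ) : 0 ≤ catalanRatio M := by
  unfold catalanRatio; positivity

lemma catalanRatio_le_one (M : ℕ) : catalanRatio M ≤ 1 := by
  rw [catalanRatio_eq, div_le_one (by positivity)]
  linarith [(Nat.cast_nonneg M : (0 : ℝ) ≤ M)]

lemma tendsto_catalanRatio : Tendsto catalanRatio atTop (nhds (1 / 4)) := by
  have h : Tendsto (fun M : ℕ => (1 / 4 : ℝ) + (3 / 4) * (1 / (((2 * M : ℕ) : ℝ) + 1))) atTop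
      (nhds (1 / 4 + (3 / 4) * 0)) :=
    ((tendsto_one_div_add_atTop_nhds_zero_nat (𝕜 := ℝ)).comp
      (tendsto_id.const_mul_atTop' (by norm_num : 0 < 2))).const_mul _ |>.const_add _
  rw [mul_zero, add_zero] at h
  refine h.congr fun M => ?_
  rw [catalanRatio_eq]
  push_cast
  field_simp
  ring

lemma ballotRatio_zero (M : ℕ) : ballotRatio M 0 = 1 := by
  unfold ballotRatio
  rw [Nat.sub_zero, ← Nat.centralBinom_eq_two_mul_choose]
  exact div_self (by exact_mod_cast M.centralBinom_ne_zero)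

lemma ballotRatio_nonneg (M i : ℕ) : 0 ≤ ballotRatio M i := by
  unfold ballotRatio; positivity

lemma ballotRatio_succ (M i : ℕ) (h : i < M) :
    ballotRatio M (i + 1) = ballotRatio M i * ((M - i) / (2 * M - i)) := by
  have h1 := Nat.choose_mul_succ_eq (2 * M - (i + 1)) M
  rw [show 2 * M - (i + 1) + 1 = 2 * M - i by omega, show 2 * M - i - M = M - i by omega] at h1
  have h2 : ((2 * M - (i + 1)).choose M : ℝ) * (2 * M - i)
      = ((2 * M - i).choose M : ℝ) * (M - i) := by
    have := congrArg (Nat.cast (R := ℝ)) h1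
    rw [Nat.cast_mul, Nat.cast_mul, Nat.cast_sub (by omega : i ≤ 2 * M),
      Nat.cast_sub h.le] at this
    push_cast at this
    exact this
  have hi : (i : ℝ) < M := by exact_mod_cast h
  have hd : (2 * M - i : ℝ) ≠ 0 := by
    have : (0 : ℝ) ≤ M := Nat.cast_nonneg M
    linarith
  unfold ballotRatio
  rw [div_mul_div_comm, mul_comm (M.centralBinom : ℝ), ← div_div, ← h2, mul_div_cancel_right₀ _ hd]

lemma ballotRatio_le (M i : ℕ) (h : i ≤ M) : ballotRatio M i ≤ (1 / 2) ^ i := by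
  induction i with
  | zero => simp [ballotRatio_zero]
  | succ i ih =>
    have hi : (i : ℝ) + 1 ≤ M := by exact_mod_cast h
    have hi0 : (0 : ℝ) ≤ i := Nat.cast_nonneg i
    rw [ballotRatio_succ M i (by omega), pow_succ]
    refine mul_le_mul (ih (by omega)) ?_ (div_nonneg (by linarith) (by linarith)) (by positivity)
    rw [div_le_iff₀ (by linarith)]
    linarith

lemma tendsto_ballot_factor (i : ℕ) :
    Tendsto (fun M : ℕ => ((M : ℝ) - i) / (2 * M - i)) atTop (nhds (1 / 2)) := by
  have hinv : Tendsto (fun M : ℕ => (i : ℝ) / (M : ℝ)) atTop (nhds 0) :=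
    tendsto_const_div_atTop_nhds_zero_nat _
  have h : Tendsto (fun M : ℕ => (1 - (i : ℝ) / M) / (2 - (i : ℝ) / M)) atTop
      (nhds ((1 - 0) / (2 - 0))) :=
    (hinv.const_sub 1).div (hinv.const_sub 2) (by norm_num)
  rw [sub_zero, sub_zero] at h
  refine h.congr' ?_
  filter_upwards [eventually_gt_atTop 0] with M hM
  have hM : (M : ℝ) ≠ 0 := by exact_mod_cast hM.ne'
  rw [← mul_div_mul_left _ _ hM]
  congr 1 <;> field_simp

lemma tendsto_ballotRatio (i : ℕ) :
    Tendsto (fun M => ballotRatio M i) atTop (nhds ((1 / 2) ^ i)) := by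
  induction i with
  | zero => simp [ballotRatio_zero]
  | succ i ih =>
    rw [pow_succ]
    refine (ih.mul (tendsto_ballot_factor i)).congr' ?_
    filter_upwards [eventually_gt_atTop i] with M hM
    rw [ballotRatio_succ M i hM]

lemma weight_eq (M i : ℕ) :
    (1 / (catalan (M + 1) : ℝ)) * ((((i + 1 : ℕ) : ℝ) / ((M + 1 : ℕ) : ℝ)) *
      ((2 * (M + 1) - (i + 1) - 1).choose (M + 1 - 1) : ℝ))
      = ((i + 1 : ℕ) : ℝ) * (catalanRatio M * ballotRatio M i) := by
  have hpos : (M.centralBinom : ℝ) ≠ 0 := by exact_mod_cast M.centralBinom_ne_zero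
  rw [show 2 * (M + 1) - (i + 1) - 1 = 2 * M - i by omega, Nat.add_sub_cancel]
  unfold catalanRatio ballotRatio
  push_cast
  rw [div_mul_div_comm, mul_comm (M.centralBinom : ℝ), mul_div_mul_right _ _ hpos, ← div_div]
  ring

/-! ### Dominated convergence for the normalized sums -/

/-- The `j`-th summand of the normalized sum with `N = M + 1`, extended by zero to all `j`. -/
noncomputable def staircaseTerm (M j : ℕ) : ℝ :=
  if j ∈ Finset.Icc 1 (M + 1) then
    (j : ℝ) * (catalanRatio M * ballotRatio M (j - 1)) * chi j else 0

lemma norm_staircaseTerm_le (M j : ℕ) :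
    ‖staircaseTerm M j‖ ≤ 2 * ((j : ℝ) ^ 2 * (1 / 2) ^ j) := by
  unfold staircaseTerm
  split_ifs with h
  · rw [Finset.mem_Icc] at h
    obtain ⟨i, rfl⟩ : ∃ i, j = i + 1 := ⟨j - 1, by omega⟩
    have hc0 := catalanRatio_nonneg M
    have hb0 := ballotRatio_nonneg M i
    rw [Nat.add_sub_cancel, norm_mul, Real.norm_of_nonneg (by positivity)]
    calc _ ≤ ((i + 1 : ℕ) : ℝ) * (1 * (1 / 2) ^ i) * ((i + 1 : ℕ) : ℝ) := by
          gcongr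
          · exact catalanRatio_le_one M
          · exact ballotRatio_le M i (by omega)
          · exact norm_chi_le _ h.1
      _ = _ := by rw [pow_succ (1 / 2 : ℝ)]; ring
  · rw [norm_zero]; positivity

lemma tendsto_staircaseTerm (j : ℕ) :
    Tendsto (fun M => staircaseTerm M j) atTop (nhds ((j : ℝ) / 2 ^ (j + 1) * chi j)) := by
  rcases Nat.eq_zero_or_pos j with rfl | hj
  · simp [staircaseTerm]
  · obtain ⟨i, rfl⟩ : ∃ i, j = i + 1 := ⟨j - 1, by omega⟩
    have h := ((tendsto_catalanRatio.mul (tendsto_ballotRatio i)).const_mul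
      ((i + 1 : ℕ) : ℝ)).mul_const (chi (i + 1))
    have e : ((i + 1 : ℕ) : ℝ) * (1 / 4 * (1 / 2) ^ i) * chi (i + 1)
        = ((i + 1 : ℕ) : ℝ) / 2 ^ (i + 1 + 1) * chi (i + 1) := by
      rw [pow_succ, pow_succ, div_pow, one_pow]
      field_simp
      ring
    rw [e] at h
    refine h.congr' ?_
    filter_upwards [eventually_ge_atTop i] with M hM
    rw [staircaseTerm, if_pos (Finset.mem_Icc.2 ⟨hj, by omega⟩), Nat.add_sub_cancel]

lemma tsum_staircaseTerm (M : ℕ) : ∑' j, staircaseTerm M j =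
    (1 / (catalan (M + 1) : ℝ)) * ∑ j ∈ Finset.Icc 1 (M + 1),
      ((j : ℝ) / ((M + 1 : ℕ) : ℝ)) *
        ((2 * (M + 1) - j - 1).choose (M + 1 - 1) : ℝ) * chi j := by
  rw [tsum_eq_sum (f := staircaseTerm M) (s := Finset.Icc 1 (M + 1)) (fun j hj => if_neg hj), Finset.mul_sum]
  refine Finset.sum_congr rfl fun j hj => ?_
  rw [staircaseTerm, if_pos hj]
  obtain ⟨i, rfl⟩ : ∃ i, j = i + 1 := ⟨j - 1, by have := Finset.mem_Icc.1 hj; omega⟩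
  rw [← mul_assoc (1 / _ : ℝ), weight_eq, Nat.add_sub_cancel]

/-- Normalized limiting identity for the staircase family. -/
theorem staircase_normalized_limit :
    IntegrableOn (fun x : ℝ =>
        (sech x - sech x / (2 - sech x) ^ 2) / x ^ 2) (Set.Ioi 0)
    ∧ HasSum (fun j : ℕ => (j : ℝ) / 2 ^ (j + 1) * chi j)
        (∫ x in Set.Ioi (0 : ℝ), (sech x - sech x / (2 - sech x) ^ 2) / x ^ 2)
    ∧ Tendsto (fun N : ℕ =>
        (1 / (catalan N : ℝ)) *
          ∑ j ∈ Finset.Icc 1 N,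
            ((j : ℝ) / (N : ℝ)) * ((2 * N - j - 1).choose (N - 1) : ℝ) * chi j)
      atTop
      (nhds (∫ x in Set.Ioi (0 : ℝ), (sech x - sech x / (2 - sech x) ^ 2) / x ^ 2)) := by
  refine ⟨integrableOn_limit, hasSum_chi, ?_⟩
  rw [← tendsto_add_atTop_iff_nat 1, ← hasSum_chi.tsum_eq]
  exact (tendsto_tsum_of_dominated_convergence (summable_sq_mul_half_pow.mul_left 2)
    tendsto_staircaseTerm (Eventually.of_forall norm_staircaseTerm_le)).congr
    tsum_staircaseTerm
end
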